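/- Let Q, R, H and K be as in the Kalman gain setup. Then (Q⁻¹ + Hᵀ R⁻¹ H)⁻¹ Q⁻¹ = I − K H. -/

import Mathlib

open Matrix

section Ring

variable {ι κ α : Type*} [Fintype ι] [DecidableEq ι] [Fintype κ] [DecidableEq κ] [CommRing α]
  {Q : Matrix ι ι α} {R : Matrix κ κ α} {G : Matrix ι κ α} {H : Matrix κ ι α}

theorem inv_inv_add_mul_inv_mul_eq_sub (hQ : IsUnit Q) (hR : IsUnit R)
    (hS : IsUnit (H * Q * G + R)) :
    (Q⁻¹ + G * R⁻¹ * H)⁻¹ = Q - Q * G * (H * Q * G + R)⁻¹ * H * Q := by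
  have hQ_inv_inv : Q⁻¹⁻¹ = Q := nonsing_inv_nonsing_inv Q ((isUnit_iff_isUnit_det Q).mp hQ)
  have hR_inv_inv : R⁻¹⁻¹ = R := nonsing_inv_nonsing_inv R ((isUnit_iff_isUnit_det R).mp hR)
  have woodbury := add_mul_mul_inv_eq_sub Q⁻¹ G R⁻¹ H
    (isUnit_nonsing_inv_iff.mpr hQ) (isUnit_nonsing_inv_iff.mpr hR)
  rw [hQ_inv_inv, hR_inv_inv, add_comm R] at woodbury
  exact woodbury hS

theorem stmt_7_general {K : Matrix ι κ α} (hQ : IsUnit Q) (hR : IsUnit R)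
    (hS : IsUnit (H * Q * G + R)) (hK : K = Q * G * (H * Q * G + R)⁻¹) :
    (Q⁻¹ + G * R⁻¹ * H)⁻¹ * Q⁻¹ = 1 - K * H := by
  have hQ_mul_inv : Q * Q⁻¹ = 1 := mul_nonsing_inv Q ((isUnit_iff_isUnit_det Q).mp hQ)
  calc (Q⁻¹ + G * R⁻¹ * H)⁻¹ * Q⁻¹
      = (Q - K * H * Q) * Q⁻¹ := by rw [inv_inv_add_mul_inv_mul_eq_sub hQ hR hS, hK]
    _ = (1 - K * H) * (Q * Q⁻¹) := by rw [← Matrix.mul_assoc, Matrix.sub_mul 1, Matrix.one_mul]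
    _ = 1 - K * H := by rw [hQ_mul_inv, Matrix.mul_one]

end Ring

theorem posDef_mul_mul_conjTranspose_add {ι κ α : Type*} [Fintype ι] [Finite κ] [Ring α]
    [PartialOrder α] [StarRing α] [AddLeftMono α] {Q : Matrix ι ι α} {R : Matrix κ κ α}
    (hQ : Q.PosSemidef) (hR : R.PosDef) (H : Matrix κ ι α) : (H * Q * Hᴴ + R).PosDef :=
  PosDef.posSemidef_add (hQ.mul_mul_conjTranspose_same H) hR

/-- In the Kalman gain setup,
`(Q⁻¹ + Hᵀ R⁻¹ H)⁻¹ Q⁻¹ = I − K H`. -/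
theorem stmt_7 (n m : ℕ) (hn : 0 < n) (hm : 0 < m)
    (Q : Matrix (Fin n) (Fin n) ℝ) (R : Matrix (Fin m) (Fin m) ℝ)
    (H : Matrix (Fin m) (Fin n) ℝ) (K : Matrix (Fin n) (Fin m) ℝ)
    (hQ : Q.PosDef) (hR : R.PosDef)
    (hK : K = Q * Hᵀ * (H * Q * Hᵀ + R)⁻¹) :
    (Q⁻¹ + Hᵀ * R⁻¹ * H)⁻¹ * Q⁻¹ = 1 - K * H :=
  have hS : (H * Q * Hᵀ + R).PosDef :=
    conjTranspose_eq_transpose_of_trivial H ▸ posDef_mul_mul_conjTranspose_add hQ.posSemidef hR H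
  stmt_7_general hQ.isUnit hR.isUnit hS.isUnit hK
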